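/- Let S be a d×d parity indicative symmetric matrix over ℤ₂ with diag(S) = 0 (every diagonal entry equals 0) and rank(S) < d − 1. Set K = 2d − rank(S). For every nonzero α ∈ ℤ₂^K with ‖α‖₀ ≡ Tr(S) (mod 2) (equivalently, ‖α‖₀ even), there exists a K-element frame F = (f_1, …, f_K) for ℤ₂^d such that S = Θ_F Θ_F* and (f_i, f_i) = α[i] for every 1 ≤ i ≤ K. -/

import Mathlib

/-!
Write `B` for the bilinear form on `V = ℤ₂^d` with matrix `S` and `R` for its radical; let
`𝟙` denote an all-ones vector. The zero diagonal makes `B` alternating, and parity indicativity then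
says `𝟙 ∈ R`. A frame as required amounts to an injective linear map `g : V → ℤ₂^K` that carries `B`
to the dot product and satisfies `g 𝟙 = α`: the images of the standard basis vectors are the rows of
the synthesis matrix, injectivity is the spanning condition, and
`(f_j, f_j) = ∑ i, f_j[i] = (g 𝟙)[j]`.

Such maps exist by a Witt-type extension argument (`exists_extension`). If
`dim V + dim R ≤ dim W`, with `W` carrying a nondegenerate symmetric form, an injective isometry
defined on a subspace `P` of `V` can be extended by one dimension (`exists_image_vector`): the
possible images of a new vector form a coset of `g(P)ᗮ`, and a dimension count shows that this coset
is not contained in `g(P)`. Here `W = ℤ₂^K` and `K = 2d - rank S = dim V + dim R` exactly. The dot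
product is not alternating, but if `P` contains a radical vector `u` with `g u = 𝟙`, every new image
is orthogonal to `𝟙`, that is, it is isotropic.

It remains to start the extension. If `α = 𝟙`, take `u = 𝟙`, sent to `α`. Otherwise
`dim R = d - rank S ≥ 2` provides `u ∈ R` independent of `𝟙`, and the initial isometry sends `u` to
`𝟙` and `𝟙` to `α`. This uses `(𝟙, 𝟙) = K = 0`, that is, `dim V + dim R` is even; this holds because
a maximal totally isotropic subspace equals its own orthogonal complement
(`even_finrank_add_finrank_radical`).
-/

open Matrix

/-- The synthesis operator of a family of `K` vectors in `ℤ₂^d`: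
the `d × K` matrix whose `j`-th column is `F j`. -/
def synthesis {d K : ℕ} (F : Fin K → Fin d → ZMod 2) :
    Matrix (Fin d) (Fin K) (ZMod 2) :=
  Matrix.of fun i j => F j i

/-- A family of vectors in `ℤ₂^d` is a (binary) frame if it spans `ℤ₂^d`. -/
def IsFrame {d K : ℕ} (F : Fin K → Fin d → ZMod 2) : Prop :=
  Submodule.span (ZMod 2) (Set.range F) = ⊤

/-- The dot product on `ℤ₂^d`. -/
def dotp {d : ℕ} (a b : Fin d → ZMod 2) : ZMod 2 := ∑ n, a n * b n

/-- A vector over `ℤ₂` is odd if its dot product with itself is `1`. -/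
def IsOddVec {d : ℕ} (v : Fin d → ZMod 2) : Prop := dotp v v = 1

/-- A `d × d` symmetric matrix `S` over `ℤ₂` is parity indicative if, for every `i`,
the diagonal entry `S i i = 1` if and only if the `i`-th row of `S` is odd. -/
def ParityIndicative {d : ℕ} (S : Matrix (Fin d) (Fin d) (ZMod 2)) : Prop :=
  ∀ i, S i i = 1 ↔ IsOddVec (S i)

/-- `‖α‖₀`, the number of nonzero entries of a vector `α ∈ ℤ₂^K`. -/
def zeroNorm {K : ℕ} (α : Fin K → ZMod 2) : ℕ :=
  (Finset.univ.filter fun i => α i ≠ 0).card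

open Module
open LinearMap (BilinForm)

/-- `g` restricts to an injective isometry on the subspace `P`, from the form `B` to the form `C`.
The map `g` is defined on the whole space, but its values outside `P` are irrelevant. -/
def IsIsometryOn {k V W : Type*} [Field k] [AddCommGroup V] [Module k V] [AddCommGroup W]
    [Module k W] (B : BilinForm k V) (C : BilinForm k W) (P : Submodule k V) (g : V →ₗ[k] W) :
    Prop :=
  (∀ p ∈ P, g p = 0 → p = 0) ∧ ∀ p ∈ P, ∀ q ∈ P, C (g p) (g q) = B p q

section Extension

variable {k V W : Type*} [Field k] [AddCommGroup V] [Module k V] [AddCommGroup W] [Module k W]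
  {B : BilinForm k V} {C : BilinForm k W}

/-- A linear map can be redefined at a vector outside `P` without changing it on `P`. -/
lemma exists_linearMap_update (P : Submodule k V) (g : V →ₗ[k] W) {v : V} (hv : v ∉ P) (x : W) :
    ∃ g' : V →ₗ[k] W, (∀ p ∈ P, g' p = g p) ∧ g' v = x := by
  obtain ⟨f, hf, hP⟩ := P.exists_dual_map_eq_bot_of_notMem hv inferInstance
  rw [← LinearMap.le_ker_iff_map] at hP
  refine ⟨g + f.smulRight ((f v)⁻¹ • (x - g v)), fun p hp => ?_, ?_⟩
  · have : f p = 0 := hP hp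
    simp [this]
  · simp [smul_smul, mul_inv_cancel₀ hf]

/-- Gluing: an isometry on `P` and an admissible image `x` of a new vector `v` define an isometry
on `P ⊔ k ∙ v`. -/
lemma IsIsometryOn.extend (hB : B.IsSymm) (hC : C.IsSymm) {P : Submodule k V} {g : V →ₗ[k] W}
    (hg : IsIsometryOn B C P g) {v : V} (hv : v ∉ P) {x : W} (hx : x ∉ P.map g)
    (hpx : ∀ p ∈ P, C (g p) x = B p v) (hxx : C x x = B v v) :
    ∃ g' : V →ₗ[k] W, IsIsometryOn B C (P ⊔ k ∙ v) g' ∧ (∀ p ∈ P, g' p = g p) ∧ g' v = x := by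
  obtain ⟨g', hP, hv'⟩ := exists_linearMap_update P g hv x
  refine ⟨g', ⟨?_, ?_⟩, hP, hv'⟩
  · intro y hy h0
    obtain ⟨p, hp, z, hz, rfl⟩ := Submodule.mem_sup.1 hy
    obtain ⟨c, rfl⟩ := Submodule.mem_span_singleton.1 hz
    rw [map_add, map_smul, hP p hp, hv'] at h0
    have hc : c = 0 := by
      by_contra hc
      apply hx
      refine ⟨-(c⁻¹ • p), P.neg_mem (P.smul_mem _ hp), ?_⟩
      rw [map_neg, map_smul, eq_neg_of_add_eq_zero_left h0, smul_neg, neg_neg, smul_smul,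
        inv_mul_cancel₀ hc, one_smul]
    subst hc
    simp only [zero_smul, add_zero] at h0 ⊢
    exact hg.1 p hp h0
  · intro y hy z hz
    obtain ⟨p, hp, y', hy', rfl⟩ := Submodule.mem_sup.1 hy
    obtain ⟨a, rfl⟩ := Submodule.mem_span_singleton.1 hy'
    obtain ⟨q, hq, z', hz', rfl⟩ := Submodule.mem_sup.1 hz
    obtain ⟨b, rfl⟩ := Submodule.mem_span_singleton.1 hz'
    simp only [map_add, map_smul, hP p hp, hP q hq, hv', LinearMap.add_apply, LinearMap.smul_apply,
      hg.2 p hp q hq, hpx p hp, hC.eq x (g q), hpx q hq, hB.eq v q, hxx]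

variable [FiniteDimensional k V] [FiniteDimensional k W]

/-- The dimension count behind the extension theorem: a new vector `v` always has an admissible
image outside `g(P)`. -/
lemma exists_image_vector (hB : B.IsRefl) (hC : C.IsSymm) (hCn : C.Nondegenerate)
    (hdim : finrank k V + finrank k (B.orthogonal ⊤) ≤ finrank k W)
    {P : Submodule k V} {g : V →ₗ[k] W} (hg : IsIsometryOn B C P g) {v : V} (hv : v ∉ P) :
    ∃ x, x ∉ P.map g ∧ ∀ p ∈ P, C (g p) x = B p v := by
  -- One solution `x₀`, obtained by moving the functional `B · v` to `W` through a left inverse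
  -- of `g` on `P` and representing it by the nondegenerate form `C`.
  have hker : LinearMap.ker (g ∘ₗ P.subtype) = ⊥ := by
    rw [LinearMap.ker_eq_bot']
    intro p hp
    exact Subtype.ext (hg.1 p p.2 hp)
  obtain ⟨h, hh⟩ := LinearMap.exists_leftInverse_of_injective _ hker
  have hx₀ : ∃ x₀, ∀ p ∈ P, C (g p) x₀ = B p v := by
    refine ⟨(C.toDual hCn).symm ((LinearMap.flip B v) ∘ₗ P.subtype ∘ₗ h), fun p hp => ?_⟩
    rw [hC.eq, BilinForm.apply_toDual_symm_apply]
    have : h (g p) = ⟨p, hp⟩ := LinearMap.congr_fun hh ⟨p, hp⟩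
    simp [this]
  obtain ⟨x₀, hx₀⟩ := hx₀
  by_contra! hcon
  have hmem : ∀ x, (∀ p ∈ P, C (g p) x = B p v) → x ∈ P.map g := by
    intro x hx
    by_contra hxP
    obtain ⟨p, hp, hne⟩ := hcon x hxP
    exact hne (hx p hp)
  obtain ⟨p₀, hp₀, rfl⟩ := hmem x₀ hx₀
  -- If every solution lay in `g(P)`, so would `g(P)ᗮ`, which would thus come from `P ⊓ Pᗮ`.
  have hle : C.orthogonal (P.map g) ≤ (P ⊓ B.orthogonal P).map g := by
    intro z hz
    have hz' : ∀ p ∈ P, C (g p) z = 0 := fun p hp => hz (g p) (Submodule.mem_map_of_mem hp)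
    obtain ⟨q, hq, hqz⟩ := hmem (g p₀ + z) (fun p hp => by rw [map_add, hx₀ p hp, hz' p hp, add_zero])
    have hzq : g (q - p₀) = z := by rw [map_sub, hqz]; abel
    have hqP : q - p₀ ∈ P := P.sub_mem hq hp₀
    refine ⟨q - p₀, ⟨hqP, fun p hp => ?_⟩, hzq⟩
    change B p (q - p₀) = 0
    rw [← hg.2 p hp _ hqP, hzq, hz' p hp]
  -- But `v - p₀` lies in `Pᗮ` and not in `P`, so `P ⊓ Pᗮ` is too small for that.
  have hlt : P ⊓ B.orthogonal P < B.orthogonal P := by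
    refine lt_of_le_of_ne inf_le_right fun heq => hv ?_
    have hmem' : v - p₀ ∈ B.orthogonal P := by
      intro p hp
      change B p (v - p₀) = 0
      rw [map_sub, ← hx₀ p hp, hg.2 p hp p₀ hp₀, sub_self]
    rw [← heq] at hmem'
    simpa using P.add_mem hmem'.1 hp₀
  have h1 := Submodule.finrank_mono hle
  have h2 := Submodule.finrank_map_le g (P ⊓ B.orthogonal P)
  have h3 := Submodule.finrank_lt_finrank_of_lt hlt
  have h4 := BilinForm.finrank_add_finrank_orthogonal hB P
  have h5 := BilinForm.finrank_add_finrank_orthogonal' (B := C) (P.map g)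
  have h6 := Submodule.finrank_map_le g P
  have h7 := Submodule.finrank_mono (inf_le_right : P ⊓ B.orthogonal ⊤ ≤ B.orthogonal ⊤)
  omega

/-- Witt-type extension theorem. The vector `e = g u`, with `u` radical, serves to make all new
images isotropic when `C` itself is not alternating. -/
theorem exists_extension (hB : B.IsSymm) (hBa : B.IsAlt) (hC : C.IsSymm) (hCn : C.Nondegenerate)
    (hdim : finrank k V + finrank k (B.orthogonal ⊤) ≤ finrank k W)
    {e : W} (he : ∀ x, C e x = 0 → C x x = 0) {u : V} (hu : ∀ v, B u v = 0)
    {P : Submodule k V} {g : V →ₗ[k] W} (hg : IsIsometryOn B C P g) (huP : u ∈ P) (hgu : g u = e) :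
    ∃ g' : V →ₗ[k] W, IsIsometryOn B C ⊤ g' ∧ ∀ p ∈ P, g' p = g p := by
  induction P using WellFoundedGT.induction generalizing g with
  | ind P ih =>
    by_cases hP : P = ⊤
    · subst hP
      exact ⟨g, hg, fun _ _ => rfl⟩
    obtain ⟨v, -, hv⟩ := SetLike.exists_of_lt (lt_top_iff_ne_top.2 hP)
    obtain ⟨x, hxP, hx⟩ := exists_image_vector hBa.isRefl hC hCn hdim hg hv
    have hxx : C x x = B v v := by
      rw [hBa.self_eq_zero v]
      apply he
      rw [← hgu, hx u huP, hu]
    obtain ⟨g₁, hg₁, hgP, -⟩ := hg.extend hB hC hv hxP hx hxx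
    have hPlt : P < P ⊔ k ∙ v := by
      refine lt_of_le_of_ne le_sup_left fun h => hv ?_
      rw [h]
      exact Submodule.mem_sup_right (Submodule.mem_span_singleton_self v)
    obtain ⟨g', hg', hag⟩ := ih _ hPlt hg₁ (hPlt.le huP) (by rw [hgP u huP, hgu])
    exact ⟨g', hg', fun p hp => by rw [hag p (hPlt.le hp), hgP p hp]⟩

/-- A maximal totally isotropic subspace of an alternating space is its own orthogonal complement,
and its dimension is then half of `dim V + dim rad B`. -/
lemma even_finrank_add_finrank_radical (hBa : B.IsAlt) :
    Even (finrank k V + finrank k (B.orthogonal ⊤)) := by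
  have hwf : WellFounded ((· > ·) : Submodule k V → Submodule k V → Prop) := wellFounded_gt
  obtain ⟨P, hP, hmax⟩ := hwf.has_min {P : Submodule k V | P ≤ B.orthogonal P}
    ⟨⊥, show ⊥ ≤ B.orthogonal ⊥ from bot_le⟩
  have hPP : B.orthogonal P = P := by
    refine le_antisymm (fun v hv => ?_) hP
    by_contra hvP
    refine hmax (P ⊔ k ∙ v) ?_ ?_
    · intro y hy z hz
      change B z y = 0
      obtain ⟨p, hp, y', hy', rfl⟩ := Submodule.mem_sup.1 hy
      obtain ⟨a, rfl⟩ := Submodule.mem_span_singleton.1 hy'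
      obtain ⟨q, hq, z', hz', rfl⟩ := Submodule.mem_sup.1 hz
      obtain ⟨b, rfl⟩ := Submodule.mem_span_singleton.1 hz'
      have h1 : B q p = 0 := hP hp q hq
      have h2 : B q v = 0 := hv q hq
      have h3 : B v p = 0 := hBa.isRefl p v (hv p hp)
      simp [h1, h2, h3, hBa.self_eq_zero v]
    · refine lt_of_le_of_ne le_sup_left fun h => hvP ?_
      rw [h]
      exact Submodule.mem_sup_right (Submodule.mem_span_singleton_self v)
  have h4 := BilinForm.finrank_add_finrank_orthogonal hBa.isRefl P
  have hrad : P ⊓ B.orthogonal ⊤ = B.orthogonal ⊤ := by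
    refine inf_eq_right.2 ?_
    conv_rhs => rw [← hPP]
    exact BilinForm.orthogonal_le le_top
  rw [hPP, hrad] at h4
  exact ⟨_, h4.symm⟩

end Extension

/-- Over `ℤ₂` the dot square of a vector is the sum of its entries. -/
lemma dotp_self {d : ℕ} (v : Fin d → ZMod 2) : dotp v v = ∑ i, v i := by
  refine Finset.sum_congr rfl fun i _ => ?_
  generalize v i = a
  revert a
  decide

lemma natCast_zeroNorm {K : ℕ} (α : Fin K → ZMod 2) : (zeroNorm α : ZMod 2) = ∑ i, α i := by
  rw [zeroNorm, Finset.card_filter, Nat.cast_sum]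
  refine Finset.sum_congr rfl fun i _ => ?_
  generalize α i = a
  revert a
  decide

/-- An injective isometry from `S` to the dot product that sends the all-ones vector to `α` is the
transpose of the synthesis matrix of a frame with the required properties. -/
lemma exists_frame_of_isometry {d K : ℕ} (S : Matrix (Fin d) (Fin d) (ZMod 2))
    (α : Fin K → ZMod 2) (g : (Fin d → ZMod 2) →ₗ[ZMod 2] (Fin K → ZMod 2))
    (hg : IsIsometryOn (Matrix.toBilin' S) (Matrix.toBilin' (1 : Matrix (Fin K) (Fin K) (ZMod 2)))
      ⊤ g) (h1 : g 1 = α) :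
    ∃ F : Fin K → Fin d → ZMod 2,
      IsFrame F ∧ S = synthesis F * (synthesis F)ᵀ ∧
        ∀ i, dotp (F i) (F i) = α i := by
  have hsum : ∀ y : Fin d → ZMod 2, g y = ∑ i, y i • g (Pi.single i 1) := fun y => by
    rw [LinearMap.pi_apply_eq_sum_univ g y]
    refine Finset.sum_congr rfl fun i _ => ?_
    congr 2
    ext j
    simp [Pi.single_apply, eq_comm]
  refine ⟨fun j i => g (Pi.single i 1) j, ?_, ?_, fun j => ?_⟩
  · by_contra hne
    obtain ⟨f, hf, hP⟩ := Submodule.exists_dual_map_eq_bot_of_lt_top (lt_top_iff_ne_top.2 hne)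
      inferInstance
    rw [← LinearMap.le_ker_iff_map] at hP
    -- A functional that vanishes on the frame is a vector in the kernel of `g`.
    have hy : (fun i => f (Pi.single i 1)) = 0 := by
      refine hg.1 _ trivial ?_
      ext j
      have hj : f (fun i => g (Pi.single i 1) j) = 0 := hP (Submodule.subset_span ⟨j, rfl⟩)
      rw [hsum]
      rw [LinearMap.pi_apply_eq_sum_univ f] at hj
      simp only [Finset.sum_apply, Pi.smul_apply, smul_eq_mul, Pi.zero_apply]
      rw [← hj]
      refine Finset.sum_congr rfl fun i _ => ?_
      rw [smul_eq_mul, mul_comm]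
      congr 2
      ext j
      simp [Pi.single_apply, eq_comm]
    apply hf
    refine LinearMap.pi_ext' fun i => LinearMap.ext_ring ?_
    simpa using congrFun hy i
  · ext i j
    have h := hg.2 (Pi.single i 1) trivial (Pi.single j 1) trivial
    rw [Matrix.toBilin'_apply', Matrix.one_mulVec, Matrix.toBilin'_single] at h
    rw [← h]
    simp [Matrix.mul_apply, synthesis, dotProduct]
  · rw [dotp_self, ← h1, hsum 1]
    simp

theorem stmt_17 {d K : ℕ} (S : Matrix (Fin d) (Fin d) (ZMod 2))
    (hsymm : S.IsSymm) (hpi : ParityIndicative S)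
    (hdiag : S.diag = 0) (hrank : S.rank + 1 < d)
    (hK : K = 2 * d - S.rank)
    (α : Fin K → ZMod 2) (hα : α ≠ 0)
    (hpar : (zeroNorm α : ZMod 2) = S.trace) :
    ∃ F : Fin K → Fin d → ZMod 2,
      IsFrame F ∧ S = synthesis F * (synthesis F)ᵀ ∧
        ∀ i, dotp (F i) (F i) = α i := by
  set B := Matrix.toBilin' S with hBdef
  set C := Matrix.toBilin' (1 : Matrix (Fin K) (Fin K) (ZMod 2)) with hCdef
  have hCapp : ∀ x y, C x y = x ⬝ᵥ y := fun x y => by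
    rw [hCdef, Matrix.toBilin'_apply', Matrix.one_mulVec]
  have hB : B.IsSymm := ⟨fun x y => by
    rw [hBdef, Matrix.toBilin'_apply', Matrix.toBilin'_apply', Matrix.dotProduct_mulVec,
      dotProduct_comm, ← Matrix.mulVec_transpose, hsymm.eq]⟩
  have hC : C.IsSymm := ⟨fun x y => by rw [hCapp, hCapp, dotProduct_comm]⟩
  have hCn : C.Nondegenerate := by
    rw [hCdef, LinearMap.BilinForm.nondegenerate_toBilin'_iff_det_ne_zero, Matrix.det_one]
    exact one_ne_zero
  have hSd : ∀ i, S i i = 0 := fun i => congrFun hdiag i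
  have hscal : ∀ c : ZMod 2, c = 0 ∨ c = 1 := by decide
  have hBa : B.IsAlt := by
    -- `x ↦ B x x` is additive in characteristic two and vanishes on the standard basis.
    let q : (Fin d → ZMod 2) →+ ZMod 2 :=
      { toFun := fun x => B x x
        map_zero' := by simp
        map_add' := fun x y => by
          simp only [map_add, LinearMap.add_apply]
          rw [hB.eq y x]
          linear_combination CharTwo.add_self_eq_zero (B x y) }
    have hq : q = 0 := by
      refine AddMonoidHom.functions_ext _ _ _ fun i c => ?_
      change B (Pi.single i c) (Pi.single i c) = 0
      rcases hscal c with rfl | rfl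
      · simp
      · rw [hBdef, Matrix.toBilin'_single, hSd]
    exact fun x => DFunLike.congr_fun hq x
  have hCself : ∀ x, C x x = ∑ i, x i := fun x => by rw [hCapp]; exact dotp_self x
  have hone : ∀ x, C 1 x = ∑ i, x i := fun x => by rw [hCapp, one_dotProduct]
  have he : ∀ x, C 1 x = 0 → C x x = 0 := fun x hx => by rw [hCself, ← hone, hx]
  have hrad : B.orthogonal ⊤ = LinearMap.ker S.mulVecLin := by
    ext y
    rw [LinearMap.mem_ker, Matrix.mulVecLin_apply]
    constructor
    · intro h
      ext i
      have : B (Pi.single i 1) y = 0 := h _ trivial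
      rw [hBdef, Matrix.toBilin'_apply', single_dotProduct, one_mul] at this
      exact this
    · intro h x _
      change B x y = 0
      rw [hBdef, Matrix.toBilin'_apply', h, dotProduct_zero]
  have hfr : S.rank + finrank (ZMod 2) (B.orthogonal ⊤) = d := by
    rw [hrad, Matrix.rank, LinearMap.finrank_range_add_finrank_ker]
    simp
  have hdim : finrank (ZMod 2) (Fin d → ZMod 2) + finrank (ZMod 2) (B.orthogonal ⊤)
      = finrank (ZMod 2) (Fin K → ZMod 2) := by
    simp only [finrank_fin_fun]
    omega
  have hKeven : (K : ZMod 2) = 0 := by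
    have h := even_finrank_add_finrank_radical hBa
    rw [hdim, finrank_fin_fun] at h
    exact (ZMod.natCast_eq_zero_iff_even).2 h
  have hmemrad : ∀ u ∈ B.orthogonal ⊤, ∀ v, B u v = 0 := fun u hu v => by
    rw [hB.eq]; exact hu v trivial
  have h1rad : (1 : Fin d → ZMod 2) ∈ B.orthogonal ⊤ := by
    rw [hrad, LinearMap.mem_ker, Matrix.mulVecLin_apply]
    ext i
    rw [Matrix.mulVec, dotProduct_one, Pi.zero_apply, ← dotp_self]
    refine (hscal (dotp (S i) (S i))).resolve_right fun h => ?_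
    have := (hpi i).2 h
    rw [hSd] at this
    exact zero_ne_one this
  have hα0 : ∑ i, α i = 0 := by
    rw [← natCast_zeroNorm, hpar, Matrix.trace, hdiag]
    simp
  have hd1 : (1 : Fin d → ZMod 2) ≠ 0 := fun h => one_ne_zero (congrFun h ⟨0, by omega⟩)
  have hK1 : (1 : Fin K → ZMod 2) ≠ 0 := fun h => one_ne_zero (congrFun h ⟨0, by omega⟩)
  have h11 : C 1 1 = 0 := by rw [hone]; simp [hKeven]
  have hbot : IsIsometryOn B C ⊥ 0 := by
    refine ⟨fun p hp _ => by simpa using hp, fun p hp q hq => ?_⟩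
    rw [(Submodule.mem_bot _).1 hp]
    simp
  -- The first step: a radical vector `u ≠ 0` goes to the all-ones vector.
  have hstart : ∀ u ∈ B.orthogonal ⊤, u ≠ 0 →
      ∃ g, IsIsometryOn B C (⊥ ⊔ ZMod 2 ∙ u) g ∧ g u = 1 := by
    intro u hu hu0
    obtain ⟨g, hg, -, hgu⟩ := hbot.extend hB hC (v := u) (x := 1) (by simpa using hu0)
      (by simpa using hK1) (fun p hp => by rw [(Submodule.mem_bot _).1 hp]; simp)
      (by rw [h11, hmemrad u hu])
    exact ⟨g, hg, hgu⟩
  by_cases hα1 : α = 1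
  · obtain ⟨g, hg, hg1⟩ := hstart 1 h1rad hd1
    have h1P : (1 : Fin d → ZMod 2) ∈ (⊥ ⊔ ZMod 2 ∙ (1 : Fin d → ZMod 2)) :=
      Submodule.mem_sup_right (Submodule.mem_span_singleton_self _)
    obtain ⟨g', hg', hag⟩ := exists_extension hB hBa hC hCn hdim.le he (hmemrad 1 h1rad) hg h1P hg1
    exact exists_frame_of_isometry S α g' hg' (by rw [hag 1 h1P, hg1, hα1])
  · obtain ⟨u, hu, hu1⟩ : ∃ u ∈ B.orthogonal ⊤, u ∉ ZMod 2 ∙ (1 : Fin d → ZMod 2) := by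
      by_contra! h
      have h1 := Submodule.finrank_mono (show B.orthogonal ⊤ ≤ ZMod 2 ∙ (1 : Fin d → ZMod 2) from h)
      rw [finrank_span_singleton hd1] at h1
      omega
    have hu0 : u ≠ 0 := fun h => hu1 (h ▸ Submodule.zero_mem _)
    obtain ⟨g, hg, hgu⟩ := hstart u hu hu0
    have h1u : (1 : Fin d → ZMod 2) ∉ (⊥ ⊔ ZMod 2 ∙ u) := by
      rw [bot_sup_eq]
      intro h
      obtain ⟨c, hc⟩ := Submodule.mem_span_singleton.1 h
      rcases hscal c with rfl | rfl
      · exact hd1 (by rw [← hc, zero_smul])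
      · rw [one_smul] at hc
        exact hu1 (hc ▸ Submodule.mem_span_singleton_self _)
    have hαu : α ∉ (⊥ ⊔ ZMod 2 ∙ u).map g := by
      rw [bot_sup_eq, LinearMap.map_span, Set.image_singleton, hgu]
      intro h
      obtain ⟨c, hc⟩ := Submodule.mem_span_singleton.1 h
      rcases hscal c with rfl | rfl
      · exact hα (by rw [← hc, zero_smul])
      · exact hα1 (by rw [← hc, one_smul])
    obtain ⟨g₁, hg₁, hag₁, hg₁1⟩ := hg.extend hB hC h1u hαu (fun p hp => by
        rw [bot_sup_eq] at hp
        obtain ⟨c, rfl⟩ := Submodule.mem_span_singleton.1 hp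
        rw [map_smul, map_smul, map_smul, LinearMap.smul_apply, LinearMap.smul_apply, hgu, hone,
          hα0, hmemrad u hu])
      (by rw [hCself, hα0, hmemrad 1 h1rad])
    have huP₀ : u ∈ (⊥ ⊔ ZMod 2 ∙ u) :=
      Submodule.mem_sup_right (Submodule.mem_span_singleton_self _)
    have huP : u ∈ (⊥ ⊔ ZMod 2 ∙ u) ⊔ ZMod 2 ∙ (1 : Fin d → ZMod 2) :=
      Submodule.mem_sup_left huP₀
    obtain ⟨g', hg', hag⟩ := exists_extension hB hBa hC hCn hdim.le he (hmemrad u hu) hg₁ huP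
      (by rw [hag₁ u huP₀, hgu])
    refine exists_frame_of_isometry S α g' hg' ?_
    rw [hag 1 (Submodule.mem_sup_right (Submodule.mem_span_singleton_self _)), hg₁1]
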